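/- Let Q_1 ⊆ ℝ^{k_1} and Q_2 ⊆ ℝ^{k_2} be polytopes, and let S be a subdivision of the product polytope Q = Q_1 × Q_2 ⊆ ℝ^{k_1+k_2} such that every edge (1-dimensional face) of S is also an edge of Q_1 × Q_2. Then S = S_1 × S_2 for some subdivision S_1 of Q_1 and some subdivision S_2 of Q_2; that is, the cells of S are exactly the products P_1 × P_2 with P_1 a cell of S_1 and P_2 a cell of S_2. -/

import Mathlib

section GenericPolytopes

variable {V : Type*} [AddCommGroup V] [Module ℝ V]

/-- A polytope in a real vector space `V`: the convex hull of a finite set of points. -/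
def IsPolytope (P : Set V) : Prop := ∃ t : Finset V, P = convexHull ℝ ↑t

/-- The face of a set `Q ⊆ V` maximizing the linear functional `φ`. -/
def faceL (φ : V →ₗ[ℝ] ℝ) (Q : Set V) : Set V := {x ∈ Q | ∀ y ∈ Q, φ y ≤ φ x}

/-- `F` is a face of `Q` if it is the maximizing set of some linear functional on `Q`.
(Taking `φ = 0` shows `Q` is a face of itself.) -/
def IsFaceOf (Q F : Set V) : Prop := ∃ φ : V →ₗ[ℝ] ℝ, F = faceL φ Q

/-- The dimension of a subset of `V`: the dimension of its affine hull. -/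
noncomputable def pdim (P : Set V) : ℕ := Module.finrank ℝ (vectorSpan ℝ P)

/-- `S` is a subdivision of the polytope `Q`: a finite collection of polytopes of the same
dimension as `Q` whose vertices are vertices of `Q`, whose union is `Q`, and in which any
two distinct cells meet (if at all) in a proper face of both. -/
structure IsSubdivision (S : Finset (Set V)) (Q : Set V) : Prop where
  poly : ∀ P ∈ S, IsPolytope P
  dim_eq : ∀ P ∈ S, pdim P = pdim Q
  vertices_subset : ∀ P ∈ S, Set.extremePoints ℝ P ⊆ Set.extremePoints ℝ Q
  cover : ⋃₀ ↑S = Q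
  inter_face : ∀ P ∈ S, ∀ P' ∈ S, P ≠ P' → (P ∩ P').Nonempty →
    IsFaceOf P (P ∩ P') ∧ P ∩ P' ≠ P ∧ IsFaceOf P' (P ∩ P') ∧ P ∩ P' ≠ P'

/-- A face of a subdivision `S` is a face of one of its cells. -/
def IsFaceOfSubdivision (S : Finset (Set V)) (F : Set V) : Prop := ∃ P ∈ S, IsFaceOf P F

/-- An edge of a subdivision: a one-dimensional face of one of its cells. -/
def IsEdgeOfSubdivision (S : Finset (Set V)) (F : Set V) : Prop :=
  IsFaceOfSubdivision S F ∧ pdim F = 1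

end GenericPolytopes

/-!
Every cell of `S` is the product of its two projections. If not, separate a missing point from the
cell `P` by a functional `f = f₁ + f₂`, with `fᵢ` depending on the `i`-th coordinate only, and let
`v` be a vertex of `P` maximizing `f`. The edges of `P` are faces of `Q₁ × Q₂`, hence products, so
moving one coordinate of `v` along an edge stays in `P`; thus `f₁` and `f₂` do not increase along
the edges at `v`. As in the simplex method, `v` then maximizes both over `P`, and `f v` bounds `f`
on the whole product of projections.

Let `x` be a point of the first projection of `P` on none of its proper faces. Two cells over `x`
whose second projections meet intersect in a common face, so if one of them has the same first
projection as `P`, so does the other; since `Q₂` is connected and covered by the second projections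
of the cells over `x`, all these cells have the same first projection. Together with the same fact
for the second factor, this makes the projections of the cells combine freely and form subdivisions
of `Q₁` and `Q₂`.
-/

section Separation

variable {V : Type*} [AddCommGroup V] [Module ℝ V]

variable (V) in
/-- Take the weak topology of the pairing of `V` with its algebraic dual. -/
lemma exists_locallyConvex_topology :
    ∃ _ : TopologicalSpace V, IsTopologicalAddGroup V ∧ ContinuousSMul ℝ V ∧
      LocallyConvexSpace ℝ V ∧ T2Space V ∧ ∀ φ : V →ₗ[ℝ] ℝ, Continuous φ := by
  let W := WeakBilin (Module.Dual.eval ℝ V)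
  have hW : T2Space W := (WeakBilin.isEmbedding (Module.eval_apply_injective ℝ)).t2Space
  exact ⟨inferInstanceAs (TopologicalSpace W), inferInstanceAs (IsTopologicalAddGroup W),
    inferInstanceAs (ContinuousSMul ℝ W), inferInstanceAs (LocallyConvexSpace ℝ W), hW,
    WeakBilin.eval_continuous (Module.Dual.eval ℝ V)⟩

lemma exists_forall_lt_of_notMem_convexHull {s : Set V} (hs : s.Finite) {v : V}
    (hv : v ∉ convexHull ℝ s) : ∃ φ : V →ₗ[ℝ] ℝ, ∀ w ∈ convexHull ℝ s, φ w < φ v := by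
  obtain ⟨_, _, _, _, _, -⟩ := exists_locallyConvex_topology V
  obtain ⟨φ, c, hlt, hc⟩ := geometric_hahn_banach_closed_point (convex_convexHull ℝ s)
    (hs.isCompact_convexHull (𝕜 := ℝ)).isClosed hv
  exact ⟨φ, fun w hw => (hlt w hw).trans hc⟩

lemma exists_forall_lt_of_mem_extremePoints_convexHull {s : Set V} (hs : s.Finite) {v : V}
    (hv : v ∈ (convexHull ℝ s).extremePoints ℝ) :
    ∃ φ : V →ₗ[ℝ] ℝ, ∀ w ∈ s, w ≠ v → φ w < φ v := by
  have hv' : v ∉ convexHull ℝ (s \ {v}) := fun h =>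
    ((convex_convexHull ℝ s).mem_extremePoints_iff_mem_sdiff_convexHull_sdiff.1 hv).2
      (convexHull_mono (Set.sdiff_subset_sdiff_left (subset_convexHull ℝ s)) h)
  obtain ⟨φ, hφ⟩ := exists_forall_lt_of_notMem_convexHull hs.sdiff hv'
  exact ⟨φ, fun w hw hwv => hφ w (subset_convexHull ℝ _ ⟨hw, hwv⟩)⟩

lemma map_eq_map_centerMass_of_forall_le {ι : Type*} {t : Finset ι} {c : ι → ℝ} {z : ι → V}
    (hc : ∀ i ∈ t, 0 ≤ c i) (hpos : 0 < ∑ i ∈ t, c i) (φ : V →ₗ[ℝ] ℝ)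
    (hle : ∀ i ∈ t, φ (z i) ≤ φ (t.centerMass c z)) {i : ι} (hi : i ∈ t) (hci : c i ≠ 0) :
    φ (z i) = φ (t.centerMass c z) := by
  have hsum : ∑ j ∈ t, c j * φ (z j) = ∑ j ∈ t, c j * φ (t.centerMass c z) := by
    rw [← Finset.sum_mul, Finset.centerMass, map_smul, map_sum, smul_eq_mul,
      mul_inv_cancel_left₀ hpos.ne']
    simp only [map_smul, smul_eq_mul]
  have hterm := (Finset.sum_eq_sum_iff_of_le fun j hj =>
    mul_le_mul_of_nonneg_left (hle j hj) (hc j hj)).1 hsum i hi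
  exact mul_left_cancel₀ hci hterm

end Separation

section Faces

variable {V W : Type*} [AddCommGroup V] [Module ℝ V] [AddCommGroup W] [Module ℝ W]

lemma faceL_subset (φ : V →ₗ[ℝ] ℝ) (P : Set V) : faceL φ P ⊆ P := fun _ hx => hx.1

lemma IsFaceOf.subset {P G : Set V} (h : IsFaceOf P G) : G ⊆ P := by
  obtain ⟨φ, rfl⟩ := h
  exact faceL_subset φ P

lemma isFaceOf_refl (P : Set V) : IsFaceOf P P :=
  ⟨0, by simp [faceL]⟩

lemma IsFaceOf.image (e : V ≃ₗ[ℝ] W) {P G : Set V} (h : IsFaceOf P G) :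
    IsFaceOf (e '' P) (e '' G) := by
  obtain ⟨φ, rfl⟩ := h
  refine ⟨φ ∘ₗ e.symm, ?_⟩
  ext x
  simpa [faceL, LinearEquiv.image_eq_preimage_symm] using fun _ => e.symm.surjective.forall

lemma faceL_convexHull (φ : V →ₗ[ℝ] ℝ) (s : Set V) :
    faceL φ (convexHull ℝ s) = convexHull ℝ (faceL φ s) := by
  refine Set.Subset.antisymm ?_ fun x hx => ⟨convexHull_mono (faceL_subset φ s) hx, ?_⟩
  · rintro x ⟨hx, hmax⟩
    rw [convexHull_eq] at hx
    obtain ⟨ι, t, c, z, hc, hc_sum, hz, rfl⟩ := hx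
    have hz_le : ∀ i ∈ t, φ (z i) ≤ φ (t.centerMass c z) := fun i hi =>
      hmax _ (subset_convexHull ℝ s (hz i hi))
    rw [← Finset.centerMass_filter_ne_zero z]
    refine Finset.centerMass_mem_convexHull _ (fun i hi => hc i (Finset.mem_filter.1 hi).1) ?_ ?_
    · rw [Finset.sum_filter_ne_zero, hc_sum]
      exact one_pos
    · intro i hi
      obtain ⟨hit, hci⟩ := Finset.mem_filter.1 hi
      refine ⟨hz i hit, fun y hy => ?_⟩
      rw [map_eq_map_centerMass_of_forall_le hc (hc_sum ▸ one_pos) φ hz_le hit hci]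
      exact hmax y (subset_convexHull ℝ s hy)
  · have hle : ∀ y ∈ s, φ y ≤ φ x := fun y hy =>
      convexHull_min (t := {x | φ y ≤ φ x}) (fun w hw => hw.2 y hy)
        (convex_halfSpace_ge φ.isLinear _) hx
    exact fun y hy => convexHull_min (t := {y | φ y ≤ φ x}) hle
      (convex_halfSpace_le φ.isLinear _) hy

end Faces

section Polytopes

variable {V W : Type*} [AddCommGroup V] [Module ℝ V] [AddCommGroup W] [Module ℝ W] {P : Set V}

namespace IsPolytope

lemma convex (hP : IsPolytope P) : Convex ℝ P := by
  obtain ⟨t, rfl⟩ := hP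
  exact convex_convexHull ℝ _

lemma isCompact [TopologicalSpace V] [IsTopologicalAddGroup V] [ContinuousSMul ℝ V]
    (hP : IsPolytope P) : IsCompact P := by
  obtain ⟨t, rfl⟩ := hP
  exact t.finite_toSet.isCompact_convexHull (𝕜 := ℝ)

lemma image (hP : IsPolytope P) (f : V →ₗ[ℝ] W) : IsPolytope (f '' P) := by
  classical
  obtain ⟨t, rfl⟩ := hP
  exact ⟨t.image f, by rw [LinearMap.image_convexHull, Finset.coe_image]⟩

lemma exists_forall_lt_of_notMem (hP : IsPolytope P) {v : V} (hv : v ∉ P) :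
    ∃ φ : V →ₗ[ℝ] ℝ, ∀ w ∈ P, φ w < φ v := by
  obtain ⟨t, rfl⟩ := hP
  exact exists_forall_lt_of_notMem_convexHull t.finite_toSet hv

lemma exists_extremePoint_mem_faceL (hP : IsPolytope P) (hne : P.Nonempty) (φ : V →ₗ[ℝ] ℝ) :
    ∃ v ∈ P.extremePoints ℝ, v ∈ faceL φ P := by
  obtain ⟨_, _, _, _, _, hcont⟩ := exists_locallyConvex_topology V
  have hexposed : IsExposed ℝ P (faceL φ P) := fun _ => ⟨⟨φ, hcont φ⟩, rfl⟩
  obtain ⟨x, hx, hmax⟩ := hP.isCompact.exists_isMaxOn hne (hcont φ).continuousOn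
  obtain ⟨v, hv⟩ := (hexposed.isCompact hP.isCompact).extremePoints_nonempty ⟨x, hx, hmax⟩
  exact ⟨v, hexposed.isExtreme.extremePoints_subset_extremePoints hv, hv.1⟩

lemma exists_mem_forall_face_eq (hP : IsPolytope P) (hne : P.Nonempty) :
    ∃ x ∈ P, ∀ G, IsFaceOf P G → x ∈ G → G = P := by
  obtain ⟨t, rfl⟩ := hP
  have hsum : 0 < ∑ _w ∈ t, (1 : ℝ) :=
    Finset.sum_pos (fun _ _ => one_pos) (by simpa using hne)
  set b : V := t.centerMass (fun _ => (1 : ℝ)) id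
  refine ⟨b, t.centerMass_mem_convexHull (fun _ _ => zero_le_one) hsum fun _ hw => hw, ?_⟩
  rintro _ ⟨φ, rfl⟩ hx
  have hvert : ∀ w ∈ t, φ w = φ b := fun w hw =>
    map_eq_map_centerMass_of_forall_le (fun _ _ => zero_le_one) hsum φ
      (fun u hu => hx.2 u (subset_convexHull ℝ _ hu)) hw one_ne_zero
  have hface : faceL φ (t : Set V) = t :=
    Set.sep_eq_self_iff_mem_true.2 fun w hw y hy => by rw [hvert w hw, hvert y hy]
  rw [faceL_convexHull, hface]

lemma finiteDimensional_vectorSpan (hP : IsPolytope P) :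
    FiniteDimensional ℝ (vectorSpan ℝ P) := by
  obtain ⟨t, rfl⟩ := hP
  rw [← direction_affineSpan, affineSpan_convexHull, direction_affineSpan]
  exact finiteDimensional_vectorSpan_of_finite ℝ t.finite_toSet

end IsPolytope

end Polytopes

section Dimension

variable {V W : Type*} [AddCommGroup V] [Module ℝ V] [AddCommGroup W] [Module ℝ W]

lemma pdim_convexHull (s : Set V) : pdim (convexHull ℝ s) = pdim s := by
  rw [pdim, pdim, ← direction_affineSpan, affineSpan_convexHull, direction_affineSpan]

lemma pdim_mono {A B : Set V} (hB : IsPolytope B) (h : A ⊆ B) : pdim A ≤ pdim B :=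
  have := hB.finiteDimensional_vectorSpan
  Submodule.finrank_mono (vectorSpan_mono ℝ h)

lemma pdim_image (e : V ≃ₗ[ℝ] W) (A : Set V) : pdim (e '' A) = pdim A := by
  have hmap := e.toLinearMap.toAffineMap.map_vectorSpan (s := A)
  rw [pdim, pdim, ← e.finrank_map_eq (vectorSpan ℝ A)]
  exact congrArg (fun p : Submodule ℝ W => Module.finrank ℝ p) hmap.symm

lemma pdim_prod {A : Set V} {B : Set W} (hA : IsPolytope A) (hB : IsPolytope B)
    (hAne : A.Nonempty) (hBne : B.Nonempty) : pdim (A ×ˢ B) = pdim A + pdim B := by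
  have := hA.finiteDimensional_vectorSpan
  have := hB.finiteDimensional_vectorSpan
  let e : (vectorSpan ℝ A).prod (vectorSpan ℝ B) ≃ₗ[ℝ] vectorSpan ℝ A × vectorSpan ℝ B :=
    { toFun := fun x => (⟨x.1.1, x.2.1⟩, ⟨x.1.2, x.2.2⟩)
      invFun := fun y => ⟨(y.1, y.2), y.1.2, y.2.2⟩
      map_add' := fun _ _ => rfl
      map_smul' := fun _ _ => rfl }
  rw [pdim, pdim, pdim, vectorSpan_prod_eq hAne hBne, e.finrank_eq, Module.finrank_prod]

lemma pdim_eq_one {s : Set V} {v u : V} (hv : v ∈ s) (hu : u ∈ s) (huv : u ≠ v)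
    (hline : ∀ w ∈ s, w - v ∈ Submodule.span ℝ {u - v}) : pdim s = 1 := by
  have hspan : vectorSpan ℝ s = Submodule.span ℝ {u - v} := by
    refine le_antisymm ?_ ?_
    · rw [vectorSpan_eq_span_vsub_set_right ℝ hv, Submodule.span_le]
      rintro _ ⟨w, hw, rfl⟩
      exact hline w hw
    · rw [Submodule.span_singleton_le_iff_mem]
      exact vsub_mem_vectorSpan ℝ hu hv
  rw [pdim, hspan, finrank_span_singleton (sub_ne_zero.2 huv)]

lemma IsFaceOf.eq_of_pdim_eq {B G : Set V} (h : IsFaceOf B G) (hB : IsPolytope B)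
    (hne : G.Nonempty) (hdim : pdim G = pdim B) : G = B := by
  have := hB.finiteDimensional_vectorSpan
  have hspan : vectorSpan ℝ G = vectorSpan ℝ B :=
    Submodule.eq_of_le_of_finrank_eq (vectorSpan_mono ℝ h.subset) hdim
  obtain ⟨φ, rfl⟩ := h
  obtain ⟨a, ha⟩ := hne
  have hker : vectorSpan ℝ (faceL φ B) ≤ LinearMap.ker φ := by
    rw [vectorSpan_eq_span_vsub_set_right ℝ ha, Submodule.span_le]
    rintro _ ⟨x, hx, rfl⟩
    have hxa : φ x = φ a := (ha.2 x hx.1).antisymm (hx.2 a ha.1)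
    simp [hxa]
  refine (faceL_subset φ B).antisymm fun b hb => ⟨hb, fun y hy => ?_⟩
  have hba : φ (b - a) = 0 := hker (hspan ▸ vsub_mem_vectorSpan ℝ hb ha.1)
  rw [sub_eq_zero.1 ((map_sub φ b a).symm.trans hba)]
  exact ha.2 y hy

end Dimension

section Edges

variable {V : Type*} [AddCommGroup V] [Module ℝ V]

/-- The vertex figure at `v` of the convex hull of `s`, as a point set: the ray from `v` through
each other point `w` of `s`, translated to the origin, is cut with the hyperplane `h = -1`. The
functional `h` is meant to attain its maximum over `s` at `v` only. -/
def vertexFigure (h : V →ₗ[ℝ] ℝ) (v : V) (s : Set V) : Set V :=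
  (fun w => (h v - h w)⁻¹ • (w - v)) '' (s \ {v})

/-- If `g` supports the vertex figure at `k` only, then `ψ = g + g k • h` vanishes at `k` and is
negative at the other points of the figure. -/
lemma exists_support_of_extremePoint_vertexFigure {s : Set V} (hs : s.Finite) {v : V}
    {h : V →ₗ[ℝ] ℝ} (hh : ∀ w ∈ s, w ≠ v → h w < h v) {k : V}
    (hk : k ∈ (convexHull ℝ (vertexFigure h v s)).extremePoints ℝ) :
    ∃ ψ : V →ₗ[ℝ] ℝ, ∀ w ∈ s, w ≠ v →
      ((h v - h w)⁻¹ • (w - v) = k → ψ w = ψ v) ∧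
      ((h v - h w)⁻¹ • (w - v) ≠ k → ψ w < ψ v) := by
  obtain ⟨g, hg⟩ := exists_forall_lt_of_mem_extremePoints_convexHull (hs.sdiff.image _) hk
  refine ⟨g + g k • h, fun w hw hwv => ?_⟩
  have hpos : 0 < h v - h w := sub_pos.2 (hh w hw hwv)
  have hdiff : (g + g k • h) w - (g + g k • h) v =
      (h v - h w) * (g ((h v - h w)⁻¹ • (w - v)) - g k) := by
    simp only [LinearMap.add_apply, LinearMap.smul_apply, map_smul, map_sub, smul_eq_mul]
    field_simp
    ring
  constructor
  · intro hwk
    rw [← sub_eq_zero, hdiff, hwk, sub_self, mul_zero]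
  · intro hwk
    rw [← sub_neg, hdiff]
    exact mul_neg_of_pos_of_neg hpos (sub_neg.2 (hg _ ⟨w, ⟨hw, hwv⟩, rfl⟩ hwk))

lemma exists_edge_of_extremePoint_vertexFigure {s : Set V} (hs : s.Finite) {v : V} (hv : v ∈ s)
    {h : V →ₗ[ℝ] ℝ} (hh : ∀ w ∈ s, w ≠ v → h w < h v) {k : V}
    (hk : k ∈ (convexHull ℝ (vertexFigure h v s)).extremePoints ℝ) :
    ∃ G, IsFaceOf (convexHull ℝ s) G ∧ pdim G = 1 ∧ v ∈ G ∧ ∃ c : ℝ, 0 < c ∧ v + c • k ∈ G := by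
  obtain ⟨ψ, hψ⟩ := exists_support_of_extremePoint_vertexFigure hs hh hk
  obtain ⟨u, ⟨hu, huv⟩, hku⟩ := extremePoints_convexHull_subset hk
  have hpos : ∀ w ∈ s, w ≠ v → 0 < h v - h w := fun w hw hwv => sub_pos.2 (hh w hw hwv)
  have hψ_le : ∀ w ∈ s, ψ w ≤ ψ v := by
    intro w hw
    by_cases hwv : w = v
    · rw [hwv]
    by_cases hwk : (h v - h w)⁻¹ • (w - v) = k
    exacts [((hψ w hw hwv).1 hwk).le, ((hψ w hw hwv).2 hwk).le]
  have hv_face : v ∈ faceL ψ s := ⟨hv, hψ_le⟩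
  have hu_face : u ∈ faceL ψ s := ⟨hu, fun w hw => (hψ_le w hw).trans ((hψ u hu huv).1 hku).ge⟩
  have hline : ∀ w ∈ faceL ψ s, w - v ∈ Submodule.span ℝ {u - v} := by
    rintro w ⟨hw, hw_max⟩
    by_cases hwv : w = v
    · simp [hwv]
    have hwk : (h v - h w)⁻¹ • (w - v) = k := by
      by_contra hwk
      exact ((hψ w hw hwv).2 hwk).not_ge (hw_max v hv)
    rw [← smul_inv_smul₀ (hpos w hw hwv).ne' (w - v), hwk, ← hku]
    exact Submodule.smul_mem _ _ (Submodule.smul_mem _ _ (Submodule.mem_span_singleton_self _))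
  refine ⟨convexHull ℝ (faceL ψ s), ⟨ψ, (faceL_convexHull ψ s).symm⟩, ?_,
    subset_convexHull ℝ _ hv_face, h v - h u, hpos u hu huv, subset_convexHull ℝ _ ?_⟩
  · rw [pdim_convexHull, pdim_eq_one hv_face hu_face huv hline]
  · rwa [← hku, smul_inv_smul₀ (hpos u hu huv).ne', add_sub_cancel]

lemma IsPolytope.mem_faceL_of_forall_edge {P : Set V} (hP : IsPolytope P) {v : V}
    (hv : v ∈ P.extremePoints ℝ) (φ : V →ₗ[ℝ] ℝ)
    (hedge : ∀ G, IsFaceOf P G → pdim G = 1 → v ∈ G → ∀ w ∈ G, φ w ≤ φ v) : v ∈ faceL φ P := by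
  obtain ⟨t, rfl⟩ := hP
  have hvt : v ∈ t := extremePoints_convexHull_subset hv
  obtain ⟨h, hh⟩ := exists_forall_lt_of_mem_extremePoints_convexHull t.finite_toSet hv
  have hfig : IsPolytope (convexHull ℝ (vertexFigure h v t)) := by
    have hfin : (vertexFigure h v t).Finite := t.finite_toSet.sdiff.image _
    exact ⟨hfin.toFinset, by rw [hfin.coe_toFinset]⟩
  have hle : ∀ w ∈ t, φ w ≤ φ v := by
    intro w hw
    by_cases hwv : w = v
    · rw [hwv]
    have hw_fig := subset_convexHull ℝ _ (Set.mem_image_of_mem _ ⟨hw, hwv⟩ : _ ∈ vertexFigure h v t)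
    obtain ⟨k, hk, -, hk_max⟩ := hfig.exists_extremePoint_mem_faceL ⟨_, hw_fig⟩ φ
    obtain ⟨G, hG, hG_dim, hvG, c, hc, hkG⟩ :=
      exists_edge_of_extremePoint_vertexFigure t.finite_toSet hvt hh hk
    have hφk : φ k ≤ 0 := by
      have := hedge G hG hG_dim hvG _ hkG
      rw [map_add, map_smul, smul_eq_mul, add_le_iff_nonpos_right] at this
      exact nonpos_of_mul_nonpos_right this hc
    have hφw : (h v - h w)⁻¹ * (φ w - φ v) ≤ 0 := by
      simpa using (hk_max _ hw_fig).trans hφk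
    exact sub_nonpos.1 (nonpos_of_mul_nonpos_right hφw (inv_pos.2 (sub_pos.2 (hh w hw hwv))))
  rw [faceL_convexHull]
  exact subset_convexHull ℝ _ ⟨hvt, hle⟩

end Edges

section Boxes

variable {E F : Type*} [AddCommGroup E] [Module ℝ E] [AddCommGroup F] [Module ℝ F]

/-- `P` is the product of its two coordinate projections. The exchange condition used here is
symmetric under swapping the factors and needs no case distinction for the empty set. -/
def IsBox {α β : Type*} (P : Set (α × β)) : Prop := ∀ p ∈ P, ∀ q ∈ P, (p.1, q.2) ∈ P

namespace IsBox

variable {α β : Type*} {P R : Set (α × β)}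

lemma fst_image_prod_snd_image (hP : IsBox P) : (Prod.fst '' P) ×ˢ (Prod.snd '' P) = P := by
  refine Set.Subset.antisymm ?_ Set.subset_fst_image_prod_snd_image
  rintro ⟨_, _⟩ ⟨⟨p, hp, rfl⟩, q, hq, rfl⟩
  exact hP p hp q hq

lemma mk_mem (hP : IsBox P) {x : α} {y : β} (hx : x ∈ Prod.fst '' P) (hy : y ∈ Prod.snd '' P) :
    (x, y) ∈ P :=
  hP.fst_image_prod_snd_image ▸ Set.mk_mem_prod hx hy

lemma swap (hP : IsBox P) : IsBox (Prod.swap '' P) := by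
  rintro _ ⟨p, hp, rfl⟩ _ ⟨q, hq, rfl⟩
  exact ⟨_, hP q hq p hp, rfl⟩

lemma fst_image_inter (hP : IsBox P) (hR : IsBox R)
    (hne : (Prod.snd '' P ∩ Prod.snd '' R).Nonempty) :
    Prod.fst '' (P ∩ R) = Prod.fst '' P ∩ Prod.fst '' R := by
  refine (Set.image_inter_subset _ _ _).antisymm ?_
  rintro x ⟨hxP, hxR⟩
  obtain ⟨y, hyP, hyR⟩ := hne
  exact ⟨(x, y), ⟨hP.mk_mem hxP hyP, hR.mk_mem hxR hyR⟩, rfl⟩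

end IsBox

lemma fst_image_swap_image {α β : Type*} (P : Set (α × β)) :
    Prod.fst '' (Prod.swap '' P) = Prod.snd '' P := by
  rw [Set.image_image]
  rfl

lemma isBox_prod {α β : Type*} (A : Set α) (B : Set β) : IsBox (A ×ˢ B) :=
  fun _ hp _ hq => ⟨hp.1, hq.2⟩

lemma IsPolytope.fst_image {P : Set (E × F)} (hP : IsPolytope P) : IsPolytope (Prod.fst '' P) :=
  hP.image (LinearMap.fst ℝ E F)

lemma IsPolytope.snd_image {P : Set (E × F)} (hP : IsPolytope P) : IsPolytope (Prod.snd '' P) :=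
  hP.image (LinearMap.snd ℝ E F)

lemma map_mk_eq_add (φ : E × F →ₗ[ℝ] ℝ) (x : E) (y : F) :
    φ (x, y) = φ (x, 0) + φ (0, y) := by
  rw [← map_add, Prod.mk_add_mk, add_zero, zero_add]

lemma faceL_prod (φ : E × F →ₗ[ℝ] ℝ) (A : Set E) (B : Set F) :
    faceL φ (A ×ˢ B) =
      faceL (φ ∘ₗ LinearMap.inl ℝ E F) A ×ˢ faceL (φ ∘ₗ LinearMap.inr ℝ E F) B := by
  ext ⟨a, b⟩
  constructor
  · rintro ⟨⟨ha, hb⟩, hmax⟩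
    refine ⟨⟨ha, fun x hx => ?_⟩, hb, fun y hy => ?_⟩
    · simpa [map_mk_eq_add φ a b, map_mk_eq_add φ x b] using hmax (x, b) ⟨hx, hb⟩
    · simpa [map_mk_eq_add φ a b, map_mk_eq_add φ a y] using hmax (a, y) ⟨ha, hy⟩
  · rintro ⟨⟨ha, ha_max⟩, hb, hb_max⟩
    refine ⟨⟨ha, hb⟩, fun ⟨x, y⟩ hxy => ?_⟩
    rw [map_mk_eq_add φ a b, map_mk_eq_add φ x y]
    exact add_le_add (ha_max x hxy.1) (hb_max y hxy.2)

lemma IsFaceOf.isBox {A : Set E} {B : Set F} {G : Set (E × F)} (h : IsFaceOf (A ×ˢ B) G) :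
    IsBox G := by
  obtain ⟨φ, rfl⟩ := h
  rw [faceL_prod]
  exact isBox_prod _ _

lemma IsFaceOf.fst_image {P G : Set (E × F)} (h : IsFaceOf P G) (hP : IsBox P)
    (hG : G.Nonempty) : IsFaceOf (Prod.fst '' P) (Prod.fst '' G) := by
  obtain ⟨φ, rfl⟩ := h
  rw [← hP.fst_image_prod_snd_image, faceL_prod] at hG
  refine ⟨φ ∘ₗ LinearMap.inl ℝ E F, ?_⟩
  conv_lhs => rw [← hP.fst_image_prod_snd_image, faceL_prod]
  exact Set.fst_image_prod _ hG.snd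

lemma IsPolytope.isBox_of_edges {P : Set (E × F)} (hP : IsPolytope P)
    (hedge : ∀ G, IsFaceOf P G → pdim G = 1 → IsBox G) : IsBox P := by
  intro p hp q hq
  by_contra hpq
  obtain ⟨f, hf⟩ := hP.exists_forall_lt_of_notMem hpq
  obtain ⟨v, hv_ext, hv, hv_max⟩ := hP.exists_extremePoint_mem_faceL ⟨p, hp⟩ f
  have hfst : v ∈ faceL (f ∘ₗ LinearMap.inl ℝ E F ∘ₗ LinearMap.fst ℝ E F) P := by
    refine hP.mem_faceL_of_forall_edge hv_ext _ fun G hG hdim hvG w hw => ?_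
    have := hv_max _ (hG.subset (hedge G hG hdim w hw v hvG))
    rw [map_mk_eq_add f w.1 v.2, ← Prod.mk.eta (p := v), map_mk_eq_add f v.1 v.2] at this
    exact le_of_add_le_add_right this
  have hsnd : v ∈ faceL (f ∘ₗ LinearMap.inr ℝ E F ∘ₗ LinearMap.snd ℝ E F) P := by
    refine hP.mem_faceL_of_forall_edge hv_ext _ fun G hG hdim hvG w hw => ?_
    have := hv_max _ (hG.subset (hedge G hG hdim v hvG w hw))
    rw [map_mk_eq_add f v.1 w.2, ← Prod.mk.eta (p := v), map_mk_eq_add f v.1 v.2] at this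
    exact le_of_add_le_add_left this
  refine (hf v hv).not_ge ?_
  calc f (p.1, q.2) = f (p.1, 0) + f (0, q.2) := map_mk_eq_add f _ _
    _ ≤ f (v.1, 0) + f (0, v.2) := add_le_add (hfst.2 p hp) (hsnd.2 q hq)
    _ = f v := (map_mk_eq_add f v.1 v.2).symm

end Boxes

section Subdivisions

variable {V W : Type*} [AddCommGroup V] [Module ℝ V] [AddCommGroup W] [Module ℝ W]

lemma isSubdivision_singleton {Q : Set V} (hQ : IsPolytope Q) : IsSubdivision {Q} Q where
  poly := by simpa
  dim_eq := by simp
  vertices_subset := by simp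
  cover := by simp
  inter_face := by
    intro P hP R hR hne
    rw [Finset.mem_singleton] at hP hR
    exact absurd (hP.trans hR.symm) hne

lemma isSubdivision_empty {S : Finset (Set V)} (hempty : ∀ P ∈ S, P = ∅) :
    IsSubdivision S (∅ : Set V) := by
  refine ⟨fun P hP => ⟨∅, ?_⟩, fun P hP => ?_, fun P hP => ?_, ?_, fun P hP R hR hne => ?_⟩
  · rw [hempty P hP, Finset.coe_empty, convexHull_empty]
  · rw [hempty P hP]
  · rw [hempty P hP]
  · exact Set.sUnion_eq_empty.2 hempty
  · exact absurd ((hempty P hP).trans (hempty R hR).symm) hne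

namespace IsSubdivision

variable {S : Finset (Set V)} {Q P R : Set V}

lemma subset (hS : IsSubdivision S Q) (hP : P ∈ S) : P ⊆ Q :=
  hS.cover ▸ Set.subset_sUnion_of_mem hP

lemma exists_mem (hS : IsSubdivision S Q) {x : V} (hx : x ∈ Q) : ∃ P ∈ S, x ∈ P := by
  rwa [← hS.cover] at hx

lemma isFaceOf_inter (hS : IsSubdivision S Q) (hP : P ∈ S) (hR : R ∈ S)
    (hne : (P ∩ R).Nonempty) : IsFaceOf P (P ∩ R) := by
  by_cases hPR : P = R
  · rw [← hPR, Set.inter_self]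
    exact isFaceOf_refl P
  · exact (hS.inter_face P hP R hR hPR hne).1

open scoped Classical in
lemma image (hS : IsSubdivision S Q) (e : V ≃ₗ[ℝ] W) :
    IsSubdivision (S.image (e '' ·)) (e '' Q) where
  poly := Finset.forall_mem_image.2 fun P hP => (hS.poly P hP).image e.toLinearMap
  dim_eq := Finset.forall_mem_image.2 fun P hP => by rw [pdim_image, pdim_image, hS.dim_eq P hP]
  vertices_subset := Finset.forall_mem_image.2 fun P hP => by
    rw [← image_extremePoints e, ← image_extremePoints e]
    exact Set.image_mono (hS.vertices_subset P hP)
  cover := by rw [Finset.coe_image, ← Set.image_sUnion, hS.cover]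
  inter_face := by
    refine Finset.forall_mem_image.2 fun P hP => Finset.forall_mem_image.2 fun R hR hne hPR => ?_
    rw [← Set.image_inter e.injective] at hPR ⊢
    obtain ⟨hfaceP, hneP, hfaceR, hneR⟩ :=
      hS.inter_face P hP R hR (fun h => hne (congrArg _ h)) hPR.of_image
    exact ⟨hfaceP.image e, e.injective.image_injective.ne hneP,
      hfaceR.image e, e.injective.image_injective.ne hneR⟩

end IsSubdivision

end Subdivisions

lemma forall_of_finite_closed_cover_of_isPreconnected {X ι : Type*} [TopologicalSpace X]
    {Q : Set X} (hQ : IsPreconnected Q) {s : Set ι} (hs : s.Finite) {B : ι → Set X}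
    (hclosed : ∀ i ∈ s, IsClosed (B i)) (hmeet : ∀ i ∈ s, (Q ∩ B i).Nonempty)
    (hcover : Q ⊆ ⋃ i ∈ s, B i) {p : ι → Prop}
    (hstep : ∀ i ∈ s, ∀ j ∈ s, (B i ∩ B j).Nonempty → p i → p j) {i : ι} (hi : i ∈ s) (hpi : p i) :
    ∀ j ∈ s, p j := by
  have hclosed_sep : ∀ q : ι → Prop, IsClosed (⋃ j ∈ {j ∈ s | q j}, B j) := fun q =>
    (hs.sep q).isClosed_biUnion fun j hj => hclosed j hj.1
  have hmeet_sep : ∀ (q : ι → Prop) {j}, j ∈ s → q j →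
      (Q ∩ ⋃ k ∈ {k ∈ s | q k}, B k).Nonempty := fun q j hj hqj =>
    (hmeet j hj).mono (Set.inter_subset_inter_right Q
      (Set.subset_biUnion_of_mem (u := B) ⟨hj, hqj⟩))
  have hcover_sep : Q ⊆ (⋃ j ∈ {j ∈ s | p j}, B j) ∪ ⋃ j ∈ {j ∈ s | ¬p j}, B j := by
    intro x hx
    obtain ⟨j, hj, hxj⟩ := Set.mem_iUnion₂.1 (hcover hx)
    by_cases hpj : p j
    exacts [Or.inl (Set.mem_biUnion ⟨hj, hpj⟩ hxj), Or.inr (Set.mem_biUnion ⟨hj, hpj⟩ hxj)]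
  intro j hj
  by_contra hpj
  obtain ⟨x, -, hx, hx'⟩ := isPreconnected_closed_iff.1 hQ _ _ (hclosed_sep p)
    (hclosed_sep (¬p ·)) hcover_sep (hmeet_sep p hi hpi) (hmeet_sep (¬p ·) hj hpj)
  obtain ⟨k, ⟨hk, hpk⟩, hxk⟩ := Set.mem_iUnion₂.1 hx
  obtain ⟨l, ⟨hl, hpl⟩, hxl⟩ := Set.mem_iUnion₂.1 hx'
  exact hpl (hstep k hk l hl ⟨x, hxk, hxl⟩ hpk)

section Products

variable {E F : Type*} [AddCommGroup E] [Module ℝ E] [AddCommGroup F] [Module ℝ F]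
  {Q₁ : Set E} {Q₂ : Set F} {S : Finset (Set (E × F))} {P R : Set (E × F)}

namespace IsSubdivision

open scoped Classical in
lemma swap (hS : IsSubdivision S (Q₁ ×ˢ Q₂)) :
    IsSubdivision (S.image (Prod.swap '' ·)) (Q₂ ×ˢ Q₁) := by
  rw [← Set.image_swap_prod]
  exact hS.image (LinearEquiv.prodComm ℝ E F)

lemma fst_image_subset (hS : IsSubdivision S (Q₁ ×ˢ Q₂)) (hP : P ∈ S) : Prod.fst '' P ⊆ Q₁ :=
  (Set.image_mono (hS.subset hP)).trans (Set.fst_image_prod_subset _ _)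

lemma snd_image_subset (hS : IsSubdivision S (Q₁ ×ˢ Q₂)) (hP : P ∈ S) : Prod.snd '' P ⊆ Q₂ :=
  (Set.image_mono (hS.subset hP)).trans (Set.snd_image_prod_subset _ _)

lemma pdim_fst_image (hS : IsSubdivision S (Q₁ ×ˢ Q₂)) (hQ₁ : IsPolytope Q₁)
    (hQ₂ : IsPolytope Q₂) (hne : Q₂.Nonempty) (hP : P ∈ S) (hbox : IsBox P) :
    pdim (Prod.fst '' P) = pdim Q₁ := by
  have hle_fst := pdim_mono hQ₁ (hS.fst_image_subset hP)
  have hle_snd := pdim_mono hQ₂ (hS.snd_image_subset hP)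
  rcases Q₁.eq_empty_or_nonempty with rfl | hne₁
  · rw [Set.subset_empty_iff.1 (hS.fst_image_subset hP)]
  have hdim := hS.dim_eq P hP
  rw [pdim_prod hQ₁ hQ₂ hne₁ hne] at hdim
  rcases P.eq_empty_or_nonempty with rfl | hPne
  · have hzero : pdim (∅ : Set (E × F)) = 0 := by rw [pdim, vectorSpan_empty, finrank_bot]
    omega
  · rw [← hbox.fst_image_prod_snd_image, pdim_prod (hS.poly P hP).fst_image
      (hS.poly P hP).snd_image (hPne.image _) (hPne.image _)] at hdim
    omega

lemma isFaceOf_fst_image_inter (hS : IsSubdivision S (Q₁ ×ˢ Q₂)) (hbox : ∀ P ∈ S, IsBox P)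
    (hP : P ∈ S) (hR : R ∈ S) (hfst : (Prod.fst '' P ∩ Prod.fst '' R).Nonempty)
    (hsnd : (Prod.snd '' P ∩ Prod.snd '' R).Nonempty) :
    IsFaceOf (Prod.fst '' P) (Prod.fst '' P ∩ Prod.fst '' R) := by
  rw [← (hbox P hP).fst_image_inter (hbox R hR) hsnd] at hfst ⊢
  exact (hS.isFaceOf_inter hP hR hfst.of_image).fst_image (hbox P hP) hfst.of_image

lemma fst_image_eq_of_snd_image_inter (hS : IsSubdivision S (Q₁ ×ˢ Q₂)) (hQ₁ : IsPolytope Q₁)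
    (hQ₂ : IsPolytope Q₂) (hbox : ∀ P ∈ S, IsBox P) (hP : P ∈ S) (hR : R ∈ S) {x : E}
    (hxP : x ∈ Prod.fst '' P) (hxR : x ∈ Prod.fst '' R)
    (hx : ∀ G, IsFaceOf (Prod.fst '' P) G → x ∈ G → G = Prod.fst '' P)
    (hsnd : (Prod.snd '' P ∩ Prod.snd '' R).Nonempty) : Prod.fst '' R = Prod.fst '' P := by
  have hQ₂ne : Q₂.Nonempty :=
    hsnd.mono (Set.inter_subset_left.trans (hS.snd_image_subset hP))
  have hinter : Prod.fst '' P ∩ Prod.fst '' R = Prod.fst '' P :=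
    hx _ (hS.isFaceOf_fst_image_inter hbox hP hR ⟨x, hxP, hxR⟩ hsnd) ⟨hxP, hxR⟩
  have hface : IsFaceOf (Prod.fst '' R) (Prod.fst '' P) := by
    rw [← hinter, Set.inter_comm]
    exact hS.isFaceOf_fst_image_inter hbox hR hP ⟨x, hxR, hxP⟩ (Set.inter_comm _ _ ▸ hsnd)
  refine (hface.eq_of_pdim_eq (hS.poly R hR).fst_image ⟨x, hxP⟩ ?_).symm
  rw [hS.pdim_fst_image hQ₁ hQ₂ hQ₂ne hP (hbox P hP),
    hS.pdim_fst_image hQ₁ hQ₂ hQ₂ne hR (hbox R hR)]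

lemma fst_image_eq (hS : IsSubdivision S (Q₁ ×ˢ Q₂)) (hQ₁ : IsPolytope Q₁) (hQ₂ : IsPolytope Q₂)
    (hbox : ∀ P ∈ S, IsBox P) (hP : P ∈ S) (hR : R ∈ S) {x : E} (hxP : x ∈ Prod.fst '' P)
    (hxR : x ∈ Prod.fst '' R) (hx : ∀ G, IsFaceOf (Prod.fst '' P) G → x ∈ G → G = Prod.fst '' P) :
    Prod.fst '' R = Prod.fst '' P := by
  obtain ⟨_, _, _, _, _, -⟩ := exists_locallyConvex_topology F
  have hfin : {T ∈ (S : Set (Set (E × F))) | x ∈ Prod.fst '' T}.Finite := S.finite_toSet.sep _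
  refine forall_of_finite_closed_cover_of_isPreconnected (B := (Prod.snd '' ·))
    (p := (Prod.fst '' · = Prod.fst '' P)) hQ₂.convex.isPreconnected hfin
    ?closed ?meet ?cover ?step ⟨hP, hxP⟩ rfl R ⟨hR, hxR⟩
  case closed =>
    exact fun T hT => (hS.poly T hT.1).snd_image.isCompact.isClosed
  case meet =>
    rintro T ⟨hT, p, hpT, -⟩
    exact ⟨p.2, hS.snd_image_subset hT ⟨p, hpT, rfl⟩, p, hpT, rfl⟩
  case cover =>
    intro y hy
    obtain ⟨T, hT, hxy⟩ := hS.exists_mem (Set.mk_mem_prod (hS.fst_image_subset hP hxP) hy)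
    exact Set.mem_biUnion ⟨hT, _, hxy, rfl⟩ ⟨_, hxy, rfl⟩
  case step =>
    rintro T ⟨hT, hxT⟩ T' ⟨hT', hxT'⟩ hmeet hTP
    rw [← hTP] at hx ⊢
    exact hS.fst_image_eq_of_snd_image_inter hQ₁ hQ₂ hbox hT hT' hxT hxT' hx hmeet

lemma exists_fst_image_eq_and_mem_snd_image (hS : IsSubdivision S (Q₁ ×ˢ Q₂)) (hQ₁ : IsPolytope Q₁)
    (hQ₂ : IsPolytope Q₂) (hbox : ∀ P ∈ S, IsBox P) (hP : P ∈ S) (hne : P.Nonempty) {y : F}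
    (hy : y ∈ Q₂) : ∃ T ∈ S, Prod.fst '' T = Prod.fst '' P ∧ y ∈ Prod.snd '' T := by
  obtain ⟨x, hxP, hx⟩ :=
    (hS.poly P hP).fst_image.exists_mem_forall_face_eq (hne.image Prod.fst)
  obtain ⟨T, hT, hxy⟩ := hS.exists_mem (Set.mk_mem_prod (hS.fst_image_subset hP hxP) hy)
  exact ⟨T, hT, hS.fst_image_eq hQ₁ hQ₂ hbox hP hT hxP ⟨_, hxy, rfl⟩ hx, _, hxy, rfl⟩

lemma snd_image_eq (hS : IsSubdivision S (Q₁ ×ˢ Q₂)) (hQ₁ : IsPolytope Q₁) (hQ₂ : IsPolytope Q₂)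
    (hbox : ∀ P ∈ S, IsBox P) (hP : P ∈ S) (hR : R ∈ S) {y : F} (hyP : y ∈ Prod.snd '' P)
    (hyR : y ∈ Prod.snd '' R) (hy : ∀ G, IsFaceOf (Prod.snd '' P) G → y ∈ G → G = Prod.snd '' P) :
    Prod.snd '' R = Prod.snd '' P := by
  classical
  simp only [← fst_image_swap_image] at hyP hyR hy ⊢
  exact hS.swap.fst_image_eq hQ₂ hQ₁ (Finset.forall_mem_image.2 fun T hT => (hbox T hT).swap)
    (Finset.mem_image_of_mem _ hP) (Finset.mem_image_of_mem _ hR) hyP hyR hy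

lemma fst_image_prod_snd_image_mem (hS : IsSubdivision S (Q₁ ×ˢ Q₂)) (hQ₁ : IsPolytope Q₁)
    (hQ₂ : IsPolytope Q₂) (hbox : ∀ P ∈ S, IsBox P) (hP : P ∈ S) (hR : R ∈ S) :
    (Prod.fst '' P) ×ˢ (Prod.snd '' R) ∈ S := by
  rcases P.eq_empty_or_nonempty with rfl | hPne
  · rwa [Set.image_empty, Set.empty_prod]
  rcases R.eq_empty_or_nonempty with rfl | hRne
  · rwa [Set.image_empty, Set.prod_empty]
  obtain ⟨y, hyR, hy⟩ :=
    (hS.poly R hR).snd_image.exists_mem_forall_face_eq (hRne.image Prod.snd)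
  obtain ⟨T, hT, hTP, hyT⟩ := hS.exists_fst_image_eq_and_mem_snd_image hQ₁ hQ₂ hbox hP hPne
    (hS.snd_image_subset hR hyR)
  rwa [← hTP, ← hS.snd_image_eq hQ₁ hQ₂ hbox hR hT hyR hyT hy,
    (hbox T hT).fst_image_prod_snd_image]

lemma extremePoints_fst_image_subset (hS : IsSubdivision S (Q₁ ×ˢ Q₂)) (hP : P ∈ S)
    (hbox : IsBox P) : (Prod.fst '' P).extremePoints ℝ ⊆ Q₁.extremePoints ℝ := by
  intro x hx
  have hne : (Prod.snd '' P).Nonempty := (Set.image_nonempty.1 ⟨x, hx.1⟩).image _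
  obtain ⟨y, hy, -⟩ := (hS.poly P hP).snd_image.exists_extremePoint_mem_faceL hne 0
  have hxy : (x, y) ∈ P.extremePoints ℝ := by
    rw [← hbox.fst_image_prod_snd_image, extremePoints_prod]
    exact ⟨hx, hy⟩
  have hxy_Q := hS.vertices_subset P hP hxy
  rw [extremePoints_prod] at hxy_Q
  exact hxy_Q.1

lemma isFaceOf_fst_image_inter_and_ne (hS : IsSubdivision S (Q₁ ×ˢ Q₂)) (hQ₁ : IsPolytope Q₁)
    (hQ₂ : IsPolytope Q₂) (hne : Q₂.Nonempty) (hbox : ∀ P ∈ S, IsBox P) (hP : P ∈ S) (hR : R ∈ S)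
    (hPR : Prod.fst '' P ≠ Prod.fst '' R) (hinter : (Prod.fst '' P ∩ Prod.fst '' R).Nonempty) :
    IsFaceOf (Prod.fst '' P) (Prod.fst '' P ∩ Prod.fst '' R) ∧
      Prod.fst '' P ∩ Prod.fst '' R ≠ Prod.fst '' P := by
  have hface : ∀ {K L}, K ∈ S → L ∈ S → (Prod.fst '' K ∩ Prod.fst '' L).Nonempty →
      IsFaceOf (Prod.fst '' K) (Prod.fst '' K ∩ Prod.fst '' L) := by
    intro K L hK hL hKL
    obtain ⟨y, hy⟩ := hne
    obtain ⟨K', hK', hKK', hyK⟩ := hS.exists_fst_image_eq_and_mem_snd_image hQ₁ hQ₂ hbox hK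
      hKL.left.of_image hy
    obtain ⟨L', hL', hLL', hyL⟩ := hS.exists_fst_image_eq_and_mem_snd_image hQ₁ hQ₂ hbox hL
      hKL.right.of_image hy
    rw [← hKK', ← hLL'] at hKL ⊢
    exact hS.isFaceOf_fst_image_inter hbox hK' hL' hKL ⟨y, hyK, hyL⟩
  refine ⟨hface hP hR hinter, fun heq => hPR ?_⟩
  have hface_R := hface hR hP (Set.inter_comm _ _ ▸ hinter)
  rw [Set.inter_comm, heq] at hface_R
  refine hface_R.eq_of_pdim_eq (hS.poly R hR).fst_image (heq ▸ hinter) ?_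
  rw [hS.pdim_fst_image hQ₁ hQ₂ hne hP (hbox P hP),
    hS.pdim_fst_image hQ₁ hQ₂ hne hR (hbox R hR)]

open scoped Classical in
lemma fst_image (hS : IsSubdivision S (Q₁ ×ˢ Q₂)) (hQ₁ : IsPolytope Q₁) (hQ₂ : IsPolytope Q₂)
    (hne : Q₂.Nonempty) (hbox : ∀ P ∈ S, IsBox P) :
    IsSubdivision (S.image (Prod.fst '' ·)) Q₁ where
  poly := Finset.forall_mem_image.2 fun P hP => (hS.poly P hP).fst_image
  dim_eq := Finset.forall_mem_image.2 fun P hP =>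
    hS.pdim_fst_image hQ₁ hQ₂ hne hP (hbox P hP)
  vertices_subset := Finset.forall_mem_image.2 fun P hP =>
    hS.extremePoints_fst_image_subset hP (hbox P hP)
  cover := by rw [Finset.coe_image, ← Set.image_sUnion, hS.cover, Set.fst_image_prod _ hne]
  inter_face := by
    refine Finset.forall_mem_image.2 fun P hP => Finset.forall_mem_image.2 fun R hR hPR hinter => ?_
    obtain ⟨hfaceP, hneP⟩ :=
      hS.isFaceOf_fst_image_inter_and_ne hQ₁ hQ₂ hne hbox hP hR hPR hinter
    rw [Set.inter_comm] at hinter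
    obtain ⟨hfaceR, hneR⟩ :=
      hS.isFaceOf_fst_image_inter_and_ne hQ₁ hQ₂ hne hbox hR hP hPR.symm hinter
    rw [Set.inter_comm] at hfaceR hneR
    exact ⟨hfaceP, hneP, hfaceR, hneR⟩

open scoped Classical in
lemma snd_image (hS : IsSubdivision S (Q₁ ×ˢ Q₂)) (hQ₁ : IsPolytope Q₁) (hQ₂ : IsPolytope Q₂)
    (hne : Q₁.Nonempty) (hbox : ∀ P ∈ S, IsBox P) :
    IsSubdivision (S.image (Prod.snd '' ·)) Q₂ := by
  have h := hS.swap.fst_image hQ₂ hQ₁ hne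
    (Finset.forall_mem_image.2 fun T hT => (hbox T hT).swap)
  rw [Finset.image_image] at h
  simpa only [Function.comp_def, fst_image_swap_image] using h

lemma exists_prod_of_prod_eq_empty (hS : IsSubdivision S (Q₁ ×ˢ Q₂)) (hQ₁ : IsPolytope Q₁)
    (hQ₂ : IsPolytope Q₂) (hempty : Q₁ ×ˢ Q₂ = ∅) :
    ∃ (S₁ : Finset (Set E)) (S₂ : Finset (Set F)), IsSubdivision S₁ Q₁ ∧ IsSubdivision S₂ Q₂ ∧
      (S : Set (Set (E × F))) = {P | ∃ P₁ ∈ S₁, ∃ P₂ ∈ S₂, P = P₁ ×ˢ P₂} := by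
  classical
  have hcell : ∀ P ∈ S, P = ∅ := fun P hP => Set.subset_empty_iff.1 (hempty ▸ hS.subset hP)
  have hmem : ∀ P, P ∈ S ↔ S.Nonempty ∧ P = ∅ := by
    refine fun P => ⟨fun hP => ⟨⟨P, hP⟩, hcell P hP⟩, ?_⟩
    rintro ⟨⟨R, hR⟩, rfl⟩
    rwa [← hcell R hR]
  rcases Set.prod_eq_empty_iff.1 hempty with rfl | rfl
  · refine ⟨S.image fun _ => ∅, {Q₂}, isSubdivision_empty ?_, isSubdivision_singleton hQ₂, ?_⟩
    · exact Finset.forall_mem_image.2 fun _ _ => rfl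
    · ext P
      rw [Finset.mem_coe, hmem]
      simp [Finset.Nonempty]
  · refine ⟨{Q₁}, S.image fun _ => ∅, isSubdivision_singleton hQ₁, isSubdivision_empty ?_, ?_⟩
    · exact Finset.forall_mem_image.2 fun _ _ => rfl
    · ext P
      rw [Finset.mem_coe, hmem]
      simp [Finset.Nonempty]

lemma exists_prod_of_isBox (hS : IsSubdivision S (Q₁ ×ˢ Q₂)) (hQ₁ : IsPolytope Q₁)
    (hQ₂ : IsPolytope Q₂) (hbox : ∀ P ∈ S, IsBox P) :
    ∃ (S₁ : Finset (Set E)) (S₂ : Finset (Set F)), IsSubdivision S₁ Q₁ ∧ IsSubdivision S₂ Q₂ ∧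
      (S : Set (Set (E × F))) = {P | ∃ P₁ ∈ S₁, ∃ P₂ ∈ S₂, P = P₁ ×ˢ P₂} := by
  rcases (Q₁ ×ˢ Q₂).eq_empty_or_nonempty with hempty | hne
  · exact hS.exists_prod_of_prod_eq_empty hQ₁ hQ₂ hempty
  refine ⟨_, _, hS.fst_image hQ₁ hQ₂ hne.snd hbox, hS.snd_image hQ₁ hQ₂ hne.fst hbox, ?_⟩
  refine Set.Subset.antisymm (fun P hP => ?_) ?_
  · exact ⟨_, Finset.mem_image_of_mem _ hP, _, Finset.mem_image_of_mem _ hP,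
      (hbox P hP).fst_image_prod_snd_image.symm⟩
  · rintro _ ⟨P₁, hP₁, P₂, hP₂, rfl⟩
    obtain ⟨P, hP, rfl⟩ := Finset.mem_image.1 hP₁
    obtain ⟨R, hR, rfl⟩ := Finset.mem_image.1 hP₂
    exact hS.fst_image_prod_snd_image_mem hQ₁ hQ₂ hbox hP hR

end IsSubdivision

end Products

theorem subdivision_of_product_general {E F : Type*} [AddCommGroup E] [Module ℝ E]
    [AddCommGroup F] [Module ℝ F] (Q₁ : Set E) (Q₂ : Set F)
    (hQ₁ : IsPolytope Q₁) (hQ₂ : IsPolytope Q₂) (S : Finset (Set (E × F)))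
    (hS : IsSubdivision S (Q₁ ×ˢ Q₂))
    (hedges : ∀ G, IsEdgeOfSubdivision S G → IsFaceOf (Q₁ ×ˢ Q₂) G) :
    ∃ (S₁ : Finset (Set E)) (S₂ : Finset (Set F)), IsSubdivision S₁ Q₁ ∧ IsSubdivision S₂ Q₂ ∧
      (S : Set (Set (E × F))) = {P | ∃ P₁ ∈ S₁, ∃ P₂ ∈ S₂, P = P₁ ×ˢ P₂} := by
  have hbox : ∀ P ∈ S, IsBox P := fun P hP =>
    (hS.poly P hP).isBox_of_edges fun G hG hdim => (hedges G ⟨⟨P, hP, hG⟩, hdim⟩).isBox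
  exact hS.exists_prod_of_isBox hQ₁ hQ₂ hbox

/-- Let `Q₁ ⊆ ℝ^{k₁}` and `Q₂ ⊆ ℝ^{k₂}` be polytopes and let `S` be a
subdivision of the product polytope `Q₁ × Q₂` all of whose edges are edges of `Q₁ × Q₂`.
Then `S` is a product subdivision: `S = S₁ × S₂` for subdivisions `S₁` of `Q₁` and `S₂`
of `Q₂`. -/
theorem subdivision_of_product {k₁ k₂ : ℕ}
    (Q₁ : Set (Fin k₁ → ℝ)) (Q₂ : Set (Fin k₂ → ℝ))
    (hQ₁ : IsPolytope Q₁) (hQ₂ : IsPolytope Q₂)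
    (S : Finset (Set ((Fin k₁ → ℝ) × (Fin k₂ → ℝ))))
    (hS : IsSubdivision S (Q₁ ×ˢ Q₂))
    (hedges : ∀ F, IsEdgeOfSubdivision S F → IsFaceOf (Q₁ ×ˢ Q₂) F) :
    ∃ (S₁ : Finset (Set (Fin k₁ → ℝ))) (S₂ : Finset (Set (Fin k₂ → ℝ))),
      IsSubdivision S₁ Q₁ ∧ IsSubdivision S₂ Q₂ ∧
      (↑S : Set (Set ((Fin k₁ → ℝ) × (Fin k₂ → ℝ)))) =
        {P | ∃ P₁ ∈ S₁, ∃ P₂ ∈ S₂, P = P₁ ×ˢ P₂} :=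
  subdivision_of_product_general Q₁ Q₂ hQ₁ hQ₂ S hS hedges
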